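/- There is an absolute constant C > 0 with the following property. Let G = (V,E) be a finite connected graph with n ≥ 2 vertices and diameter D ≥ 1. Then there exist a finite set V̂, an injective map ι : V → V̂, a map f : V̂ → V with f(ι(v)) = v for all v, and a row-stochastic matrix P̂ on V̂ with P̂_{ûv̂} > 0 only if (f(û), f(v̂)) ∈ E or f(û) = f(v̂), such that: for every nonnegative vector x : V → ℝ≥0 with x_ave := (Σ_v x_v)/n > 0, defining y₀ : V̂ → ℝ by y₀(ι(v)) = x_v and y₀(ŵ) = 0 for ŵ ∉ ι(V), one has |2·(P̂^t y₀)(ι(v)) − x_ave| ≤ ε·x_ave for every v ∈ V, every ε ∈ (0,1) and every t ≥ C·D·(log n + log(1/ε)). Moreover, if G has doubling dimension at most ρ, then V̂ and P̂ can be chosen so that additionally the number of pairs (û,v̂) with û ≠ v̂ and P̂_{ûv̂} > 0 is at most C(ρ)·D·n^{1 − 1/(ρ+1)}, where C(ρ) depends only on ρ. -/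

import Mathlib

/-!
The lifted chain is built from a breadth-first-search tree of `G` (height at most `D`). It lives
on three copies of `V`: the original vertices, a copy of the tree traversed towards the root, and
a copy traversed away from the root. A token at an original vertex leaves with probability
`1/(4D+4)`, climbs to the root, waits there for a geometric time of mean of order `D`, and descends,
choosing each branch with probability proportional to its size, so that it stops at a uniformly
random vertex. The waiting time is tuned so that the stationary distribution gives each original
vertex mass exactly `1/(2n)` (`SpanTree.stat_sum`, `SpanTree.stat_stationary`).

Mixing follows from Doeblin's condition: from every state, after `12D+12` steps the walk is at any
given original vertex with probability at least `1/(256 n)` (`SpanTree.minorization`). Hence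
`P ^ t` converges entrywise to the stationary distribution at rate `(255/256) ^ (t/(12D+12))`
(`SpanTree.chain_mixing`), and an absolute error `ε/n` is reached in time
`O(D (log n + log (1/ε)))`.

The same chain serves for the sparsity claim: it has at most `5n` transitions between distinct
states, and a graph of doubling dimension at most `ρ` has at most `(2D)^ρ` vertices, so that
`n ≤ 2 D n^{1 - 1/(ρ+1)}` (`doubling_card_le`).
-/

/-- A matrix is row-stochastic: nonnegative entries and each row sums to 1. -/
def RowStochastic {W : Type*} [Fintype W] (P : Matrix W W ℝ) : Prop :=
  (∀ i j, 0 ≤ P i j) ∧ ∀ i, ∑ j, P i j = 1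

/-- `G` has doubling dimension at most `ρ` (w.r.t. the shortest-path metric): every
ball of radius `r` can be covered by at most `2^ρ` balls of radius `r/2`. -/
def DoublingDimLE {V : Type*} [Fintype V] (G : SimpleGraph V) (ρ : ℝ) : Prop :=
  ∀ (x : V) (r : ℝ), 0 < r →
    ∃ s : Finset V, ((s.card : ℝ) ≤ (2 : ℝ) ^ ρ) ∧
      ∀ w : V, (G.dist x w : ℝ) < r → ∃ y ∈ s, (G.dist y w : ℝ) < r / 2

open Finset

/-! ### Mixing from a minorization condition -/

/-- Applying a row-stochastic matrix preserves pointwise bounds on functions. -/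
lemma RowStochastic.mulVec_mem {W : Type*} [Fintype W] {P : Matrix W W ℝ}
    (hP : RowStochastic P) {h : W → ℝ} {a b : ℝ} (hh : ∀ w, a ≤ h w ∧ h w ≤ b) (w : W) :
    a ≤ ∑ z, P w z * h z ∧ ∑ z, P w z * h z ≤ b := by
  have e (c : ℝ) : c = ∑ z, P w z * c := by rw [← Finset.sum_mul, hP.2, one_mul]
  constructor
  · rw [e a]
    exact Finset.sum_le_sum fun z _ => mul_le_mul_of_nonneg_left (hh z).1 (hP.1 w z)
  · rw [e b]
    exact Finset.sum_le_sum fun z _ => mul_le_mul_of_nonneg_left (hh z).2 (hP.1 w z)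

lemma RowStochastic.pow {W : Type*} [Fintype W] [DecidableEq W] {P : Matrix W W ℝ}
    (hP : RowStochastic P) (t : ℕ) : RowStochastic (P ^ t) := by
  induction t with
  | zero =>
    refine ⟨fun i j => ?_, fun i => ?_⟩
    · rw [pow_zero, Matrix.one_apply]; split_ifs <;> norm_num
    · simp [Matrix.one_apply]
  | succ t ih =>
    refine ⟨fun i j => ?_, fun i => ?_⟩
    · rw [pow_succ, Matrix.mul_apply]
      exact Finset.sum_nonneg fun z _ => mul_nonneg (ih.1 i z) (hP.1 z j)
    · simp_rw [pow_succ, Matrix.mul_apply]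
      rw [Finset.sum_comm]
      simp_rw [← Finset.mul_sum, hP.2, mul_one, ih.2]

/-- Doeblin's argument: if every row of `P ^ T` dominates `δ ν` for a fixed probability
vector `ν`, then each application of `P ^ T` shrinks the oscillation of the function
`w ↦ P ^ t w z` by a factor `1 - δ`. -/
lemma doeblin_interval {W : Type*} [Fintype W] [DecidableEq W] {P : Matrix W W ℝ}
    (hP : RowStochastic P) {T : ℕ} {δ : ℝ} (ν : W → ℝ)
    (hν : ∑ w, ν w = 1) (hmin : ∀ w z, δ * ν z ≤ (P ^ T) w z) (z : W) (k : ℕ) :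
    ∃ a b : ℝ, b - a = (1 - δ) ^ k ∧ ∀ w, a ≤ (P ^ (T * k)) w z ∧ (P ^ (T * k)) w z ≤ b := by
  induction k with
  | zero =>
    refine ⟨0, 1, by simp, fun w => ?_⟩
    rw [mul_zero, pow_zero, Matrix.one_apply]
    split_ifs <;> norm_num
  | succ k ih =>
    obtain ⟨a, b, hab, h⟩ := ih
    set g : W → ℝ := fun w => (P ^ (T * k)) w z with hg
    set m := ∑ y, ν y * g y with hm
    refine ⟨δ * m + (1 - δ) * a, δ * m + (1 - δ) * b, by rw [pow_succ, ← hab]; ring,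
      fun w => ?_⟩
    have hsum : (P ^ (T * (k + 1))) w z
        = δ * m + ∑ y, ((P ^ T) w y - δ * ν y) * g y := by
      rw [mul_add, mul_one, add_comm, pow_add, Matrix.mul_apply, hm, Finset.mul_sum,
        ← Finset.sum_add_distrib]
      exact Finset.sum_congr rfl fun y _ => by simp only [hg]; ring
    have hconst (c : ℝ) : ∑ y, ((P ^ T) w y - δ * ν y) * c = (1 - δ) * c := by
      rw [← Finset.sum_mul, Finset.sum_sub_distrib, ← Finset.mul_sum, hν, (hP.pow T).2]
      ring
    rw [hsum, ← hconst a, ← hconst b]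
    refine ⟨add_le_add_right ?_ _, add_le_add_right ?_ _⟩
    · exact Finset.sum_le_sum fun y _ =>
        mul_le_mul_of_nonneg_left (h y).1 (sub_nonneg.2 (hmin w y))
    · exact Finset.sum_le_sum fun y _ =>
        mul_le_mul_of_nonneg_left (h y).2 (sub_nonneg.2 (hmin w y))

lemma stationary_pow {W : Type*} [Fintype W] [DecidableEq W] {P : Matrix W W ℝ}
    {π : W → ℝ} (hst : ∀ z, ∑ w, π w * P w z = π z) (t : ℕ) (z : W) :
    ∑ w, π w * (P ^ t) w z = π z := by
  induction t generalizing z with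
  | zero => simp [Matrix.one_apply]
  | succ t ih =>
    simp_rw [pow_succ, Matrix.mul_apply, Finset.mul_sum]
    rw [Finset.sum_comm]
    simp_rw [← mul_assoc, ← Finset.sum_mul, ih, hst]

/-- Under the minorization condition the entries of `P ^ t` converge geometrically to any
stationary distribution. -/
lemma doeblin_mixing {W : Type*} [Fintype W] [DecidableEq W] {P : Matrix W W ℝ}
    (hP : RowStochastic P) {T : ℕ} {δ : ℝ} (ν : W → ℝ)
    (hν : ∑ w, ν w = 1) (hmin : ∀ w z, δ * ν z ≤ (P ^ T) w z)
    {π : W → ℝ} (hπ0 : ∀ w, 0 ≤ π w) (hπ1 : ∑ w, π w = 1)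
    (hst : ∀ z, ∑ w, π w * P w z = π z) (t : ℕ) (w z : W) :
    |(P ^ t) w z - π z| ≤ (1 - δ) ^ (t / T) := by
  obtain ⟨a, b, hab, h⟩ := doeblin_interval hP ν hν hmin z (t / T)
  have h' : ∀ w, a ≤ (P ^ t) w z ∧ (P ^ t) w z ≤ b := by
    intro w
    have := (hP.pow (t % T)).mulVec_mem h w
    rwa [← Matrix.mul_apply, ← pow_add, Nat.mod_add_div] at this
  have e (c : ℝ) : c = ∑ y, π y * c := by rw [← Finset.sum_mul, hπ1, one_mul]
  have h1 : a ≤ π z := by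
    rw [← stationary_pow hst t z, e a]
    exact Finset.sum_le_sum fun y _ => mul_le_mul_of_nonneg_left (h' y).1 (hπ0 y)
  have h2 : π z ≤ b := by
    rw [← stationary_pow hst t z, e b]
    exact Finset.sum_le_sum fun y _ => mul_le_mul_of_nonneg_left (h' y).2 (hπ0 y)
  rw [← hab, abs_le]
  constructor <;> linarith [(h' w).1, (h' w).2]

lemma pow_mul_pow_le {W : Type*} [Fintype W] [DecidableEq W] {P : Matrix W W ℝ}
    (hP : RowStochastic P) (s t : ℕ) (a b c : W) :
    (P ^ s) a b * (P ^ t) b c ≤ (P ^ (s + t)) a c := by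
  rw [pow_add, Matrix.mul_apply]
  exact Finset.single_le_sum (f := fun y => (P ^ s) a y * (P ^ t) y c)
    (fun y _ => mul_nonneg ((hP.pow s).1 a y) ((hP.pow t).1 y c)) (Finset.mem_univ b)

/-- A state held with probability `1 - q` that otherwise moves to states of value at least
`c` has value at least `c / 2` once `1 / q` steps have elapsed. -/
lemma half_of_recursion {a : ℕ → ℝ} {q c : ℝ} {m₀ m₁ K : ℕ} (hq0 : 0 ≤ q) (hq1 : q ≤ 1)
    (hc : 0 ≤ c) (hK : 1 ≤ q * K) (ha : ∀ m, 0 ≤ a m)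
    (hrec : ∀ m, m₀ ≤ m → m < m₁ → (1 - q) * a m + q * c ≤ a (m + 1))
    {m : ℕ} (hm : m₀ + K ≤ m) (hm1 : m ≤ m₁) : c / 2 ≤ a m := by
  have key : ∀ k, m₀ + k ≤ m₁ → c * (1 - (1 - q) ^ k) ≤ a (m₀ + k) := by
    intro k
    induction k with
    | zero => intro _; simpa using ha m₀
    | succ k ih =>
      intro hk
      have h1 := ih (by omega)
      have h2 := hrec (m₀ + k) (by omega) (by omega)
      have h3 := mul_le_mul_of_nonneg_left h1 (sub_nonneg.2 hq1)
      have : c * (1 - (1 - q) ^ (k + 1)) = (1 - q) * (c * (1 - (1 - q) ^ k)) + q * c := by ring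
      rw [this, ← add_assoc]
      linarith
  obtain ⟨k, rfl⟩ : ∃ k, m = m₀ + k := ⟨m - m₀, by omega⟩
  have h1 := key k hm1
  have hKk : (K : ℝ) ≤ k := by exact_mod_cast (by omega : K ≤ k)
  have h2 : (1 - q) ^ k ≤ 1 / 2 := by
    calc (1 - q) ^ k ≤ (Real.exp (-q)) ^ k :=
          pow_le_pow_left₀ (by linarith) (by linarith [Real.add_one_le_exp (-q)]) k
      _ = Real.exp (-(q * k)) := by rw [← Real.exp_nat_mul]; ring_nf
      _ ≤ Real.exp (-1) := Real.exp_le_exp.2 (by nlinarith)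
      _ ≤ 1 / 2 := by
          rw [Real.exp_neg, ← one_div]
          exact one_div_le_one_div_of_le (by norm_num) (by linarith [Real.add_one_le_exp (1 : ℝ)])
  nlinarith

/-! ### Rooted trees and subtree sizes -/

/-- A rooted tree of height at most `D` on the vertex set `V`, given by its parent map
(extended by `par root = root`) and depth function. -/
structure SpanTree (V : Type) (D : ℕ) where
  root : V
  par : V → V
  depth : V → ℕ
  par_root : par root = root
  depth_root : depth root = 0
  depth_par : ∀ v, v ≠ root → depth (par v) + 1 = depth v
  depth_le : ∀ v, depth v ≤ D

/-- A breadth-first-search tree of a connected graph. -/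
lemma exists_bfsTree {V : Type} {G : SimpleGraph V} (hG : G.Connected)
    {D : ℕ} (hD : ∀ u v, G.dist u v ≤ D) :
    ∃ τ : SpanTree V D, ∀ v, v ≠ τ.root → G.Adj v (τ.par v) := by
  classical
  obtain ⟨r⟩ := hG.nonempty
  have h : ∀ v, ∃ u, v ≠ r → G.Adj v u ∧ G.dist r u + 1 = G.dist r v := by
    intro v
    by_cases hv : v = r
    · exact ⟨v, fun h => absurd hv h⟩
    · obtain ⟨w, hw⟩ := hG.exists_walk_length_eq_dist v r
      cases w with
      | nil => exact absurd rfl hv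
      | @cons _ u _ huv w =>
        refine ⟨u, fun _ => ⟨huv, ?_⟩⟩
        rw [SimpleGraph.Walk.length_cons] at hw
        have h1 := SimpleGraph.dist_le w
        have h2 := hG.dist_triangle (u := v) (v := u) (w := r)
        rw [SimpleGraph.dist_eq_one_iff_adj.2 huv] at h2
        rw [SimpleGraph.dist_comm (u := r) (v := u), SimpleGraph.dist_comm (u := r) (v := v)]
        omega
  choose g hg using h
  exact ⟨⟨r, fun v => if v = r then r else g v, fun v => G.dist r v, by simp,
    SimpleGraph.dist_self, fun v hv => by simpa [hv] using (hg v hv).2, fun v => hD r v⟩,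
    fun v hv => by
      have hv' : v ≠ r := hv
      simpa [hv'] using (hg v hv').1⟩

namespace SpanTree

variable {V : Type} [Fintype V] [DecidableEq V] {D : ℕ} (τ : SpanTree V D)

/-- The number of descendants of a vertex exactly `k` generations below it. -/
def gen : ℕ → V → ℝ
  | 0, _ => 1
  | k + 1, w => ∑ c, if c ≠ τ.root ∧ τ.par c = w then gen k c else 0

/-- The number of vertices in the subtree hanging at a vertex, itself included. -/
def size (w : V) : ℝ := ∑ k ∈ range (D + 1), τ.gen k w

lemma gen_nonneg (k : ℕ) (w : V) : 0 ≤ τ.gen k w := by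
  induction k generalizing w with
  | zero => simp [gen]
  | succ k ih =>
    rw [gen]
    exact Finset.sum_nonneg fun c _ => by split_ifs <;> simp [ih]

lemma gen_eq_zero (k : ℕ) (w : V) (h : D < τ.depth w + k) : τ.gen k w = 0 := by
  induction k generalizing w with
  | zero => have := τ.depth_le w; omega
  | succ k ih =>
    rw [gen]
    refine Finset.sum_eq_zero fun c _ => ?_
    split_ifs with hc
    · refine ih c ?_
      have := τ.depth_par c hc.1
      rw [hc.2] at this
      omega
    · rfl

/-- Summing over vertices and then over their children visits each non-root vertex once. -/
lemma sum_children (g : V → ℝ) :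
    ∑ w, (∑ c, if c ≠ τ.root ∧ τ.par c = w then g c else 0) = ∑ c, g c - g τ.root := by
  rw [Finset.sum_comm, eq_sub_iff_add_eq, ← Finset.sum_erase_add _ _ (Finset.mem_univ τ.root),
    ← Finset.sum_erase_add _ g (Finset.mem_univ τ.root)]
  have h0 : (∑ w, if τ.root ≠ τ.root ∧ τ.par τ.root = w then g τ.root else 0) = 0 := by simp
  rw [h0, add_zero]
  congr 1
  refine Finset.sum_congr rfl fun c hc => ?_
  have hc' : c ≠ τ.root := Finset.ne_of_mem_erase hc
  simp [hc']

lemma size_rec (w : V) :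
    τ.size w = 1 + ∑ c, if c ≠ τ.root ∧ τ.par c = w then τ.size c else 0 := by
  have h1 : ∑ k ∈ range (D + 1 + 1), τ.gen k w = τ.size w := by
    rw [Finset.sum_range_succ, τ.gen_eq_zero (D + 1) w (by omega), add_zero, size]
  rw [← h1, Finset.sum_range_succ', add_comm]
  congr 1
  simp only [gen, size]
  rw [Finset.sum_comm]
  refine Finset.sum_congr rfl fun c _ => ?_
  split_ifs <;> simp

lemma size_pos (w : V) : 0 < τ.size w := by
  rw [size_rec]
  have : 0 ≤ ∑ c, if c ≠ τ.root ∧ τ.par c = w then τ.size c else 0 :=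
    Finset.sum_nonneg fun c _ => by
      split_ifs
      · exact Finset.sum_nonneg fun k _ => τ.gen_nonneg k c
      · exact le_rfl
  linarith

lemma size_root : τ.size τ.root = Fintype.card V := by
  have h := τ.sum_children τ.size
  have h2 : ∑ w, τ.size w
      = ∑ w : V, (1 : ℝ) + ∑ w, ∑ c, if c ≠ τ.root ∧ τ.par c = w then τ.size c else 0 := by
    rw [← Finset.sum_add_distrib]
    exact Finset.sum_congr rfl fun w _ => τ.size_rec w
  rw [h] at h2
  simp only [Finset.sum_const, Finset.card_univ, nsmul_eq_mul, mul_one] at h2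
  linarith

lemma sum_gen_le (k : ℕ) : ∑ w, τ.gen k w ≤ Fintype.card V := by
  induction k with
  | zero => simp [gen]
  | succ k ih =>
    simp only [gen]
    rw [τ.sum_children (τ.gen k)]
    linarith [τ.gen_nonneg k τ.root]

lemma sum_size_le : ∑ w, τ.size w ≤ Fintype.card V * (D + 1) := by
  simp only [size]
  rw [Finset.sum_comm]
  calc ∑ k ∈ range (D + 1), ∑ w, τ.gen k w ≤ ∑ k ∈ range (D + 1), (Fintype.card V : ℝ) :=
        Finset.sum_le_sum fun k _ => τ.sum_gen_le k
    _ = _ := by simp [mul_comm]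

lemma card_le_sum_size : (Fintype.card V : ℝ) ≤ ∑ w, τ.size w := by
  rw [← τ.size_root]
  exact Finset.single_le_sum (fun w _ => (τ.size_pos w).le) (Finset.mem_univ _)

/-! ### The lifted chain -/

/-- The mean holding time at the top of the upward tree, chosen so that the stationary
distribution puts mass exactly `1/2` on the original vertices. -/
noncomputable def hold : ℝ := 4 * D + 5 - 2 * ((∑ w, τ.size w) / Fintype.card V)

/-- The lifted chain on three copies of `V`: the original vertices `inl v`, an upward copy
`inr (inl v)` and a downward copy `inr (inr v)` of the tree. An original vertex is held with
probability `1 - 1/(4D+4)` and otherwise enters the upward tree; there the walk climbs to the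
root, waits a geometric time of mean `hold`, and passes to the downward tree. In the downward
tree it stops at the original copy of the current vertex or descends to a child, with
probabilities proportional to `1` and to the subtree sizes, so that it stops at a uniformly
distributed vertex. -/
noncomputable def chain : Matrix (V ⊕ V ⊕ V) (V ⊕ V ⊕ V) ℝ
  | .inl u, .inl v => if v = u then 1 - 1 / (4 * D + 4) else 0
  | .inl u, .inr (.inl v) => if v = u then 1 / (4 * D + 4) else 0
  | .inl _, .inr (.inr _) => 0
  | .inr (.inl _), .inl _ => 0
  | .inr (.inl u), .inr (.inl v) =>
      if v = τ.par u then (if u = τ.root then 1 - 1 / τ.hold else 1) else 0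
  | .inr (.inl u), .inr (.inr v) => if v = τ.root then (if u = τ.root then 1 / τ.hold else 0) else 0
  | .inr (.inr u), .inl v => if v = u then 1 / τ.size u else 0
  | .inr (.inr _), .inr (.inl _) => 0
  | .inr (.inr u), .inr (.inr v) =>
      if v ≠ τ.root ∧ τ.par v = u then τ.size v / τ.size u else 0

/-- The stationary distribution of the lifted chain. -/
noncomputable def stat : V ⊕ V ⊕ V → ℝ
  | .inl _ => 1 / (2 * Fintype.card V)
  | .inr (.inl v) => 1 / (8 * D + 8) *
      (if v = τ.root then τ.hold else τ.size v / Fintype.card V)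
  | .inr (.inr v) => 1 / (8 * D + 8) * (τ.size v / Fintype.card V)

lemma card_cast_pos (τ : SpanTree V D) : (0 : ℝ) < Fintype.card V := by
  rw [← τ.size_root]; exact τ.size_pos _

lemma hold_bounds : 1 ≤ τ.hold ∧ τ.hold ≤ 4 * D + 4 := by
  have hn := τ.card_cast_pos
  have h1 : (∑ w, τ.size w) / Fintype.card V ≤ D + 1 := by
    rw [div_le_iff₀ hn]; linarith [τ.sum_size_le]
  have h2 : 1 ≤ (∑ w, τ.size w) / Fintype.card V := by
    rw [le_div_iff₀ hn]; linarith [τ.card_le_sum_size]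
  have h3 : (0 : ℝ) ≤ D := Nat.cast_nonneg D
  unfold hold
  constructor <;> linarith

/-- One step of the chain acting on a function `h` on the lifted state space. -/
lemma step_inl (h : V ⊕ V ⊕ V → ℝ) (u : V) :
    ∑ z, τ.chain (.inl u) z * h z
      = (1 - 1 / (4 * D + 4)) * h (.inl u) + 1 / (4 * D + 4) * h (.inr (.inl u)) := by
  simp [Fintype.sum_sum_type, chain]

lemma step_up (h : V ⊕ V ⊕ V → ℝ) (u : V) (hu : u ≠ τ.root) :
    ∑ z, τ.chain (.inr (.inl u)) z * h z = h (.inr (.inl (τ.par u))) := by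
  simp [Fintype.sum_sum_type, chain, hu]

lemma step_root (h : V ⊕ V ⊕ V → ℝ) :
    ∑ z, τ.chain (.inr (.inl τ.root)) z * h z
      = (1 - 1 / τ.hold) * h (.inr (.inl τ.root)) + 1 / τ.hold * h (.inr (.inr τ.root)) := by
  simp [Fintype.sum_sum_type, chain, τ.par_root]

lemma step_down (h : V ⊕ V ⊕ V → ℝ) (u : V) :
    ∑ z, τ.chain (.inr (.inr u)) z * h z
      = (h (.inl u) + ∑ c, if c ≠ τ.root ∧ τ.par c = u then τ.size c * h (.inr (.inr c)) else 0)
        / τ.size u := by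
  simp only [Fintype.sum_sum_type, chain, ite_mul, zero_mul, Finset.sum_const_zero, zero_add,
    Finset.sum_ite_eq', Finset.mem_univ, if_true, add_div, Finset.sum_div]
  congr 1
  · ring
  · refine Finset.sum_congr rfl fun c _ => ?_
    split_ifs <;> ring

lemma chain_rowStochastic : RowStochastic τ.chain := by
  have hh := τ.hold_bounds.1
  have hD : (0 : ℝ) ≤ D := Nat.cast_nonneg D
  have h1 : (0 : ℝ) ≤ 1 / (4 * D + 4) := by positivity
  have h2 : 1 / (4 * (D : ℝ) + 4) ≤ 1 := by rw [div_le_one (by positivity)]; linarith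
  have h3 : (0 : ℝ) ≤ 1 / τ.hold := by positivity
  have h4 : 1 / τ.hold ≤ 1 := by rw [div_le_one (by linarith)]; exact hh
  refine ⟨?_, ?_⟩
  · rintro (u | u | u) (v | v | v) <;> simp only [chain] <;> (try split_ifs) <;>
      first
        | exact le_rfl
        | exact zero_le_one
        | linarith
        | exact div_nonneg zero_le_one (τ.size_pos _).le
        | exact div_nonneg (τ.size_pos _).le (τ.size_pos _).le
  · rintro (u | u | u)
    · simpa using τ.step_inl (fun _ => 1) u
    · by_cases hu : u = τ.root
      · subst hu; simpa using τ.step_root (fun _ => 1)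
      · simpa using τ.step_up (fun _ => 1) u hu
    · have := τ.step_down (fun _ => 1) u
      simp only [mul_one] at this
      rw [this, ← τ.size_rec, div_self (τ.size_pos u).ne']

lemma stat_nonneg (w : V ⊕ V ⊕ V) : 0 ≤ τ.stat w := by
  have hh := τ.hold_bounds.1
  have hs := fun v => (τ.size_pos v).le
  rcases w with v | v | v
  · simp only [stat]; positivity
  · simp only [stat]
    split_ifs
    · have : 0 ≤ τ.hold := by linarith
      positivity
    · have := hs v
      positivity
  · have := hs v
    simp only [stat]; positivity

lemma stat_sum : ∑ w, τ.stat w = 1 := by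
  have hn := τ.card_cast_pos
  have hD : (0 : ℝ) ≤ D := Nat.cast_nonneg D
  have e : ∑ v, (if v = τ.root then τ.hold else τ.size v / Fintype.card V)
      = τ.hold + ((∑ v, τ.size v) / Fintype.card V - 1) := by
    rw [← Finset.add_sum_erase _ _ (Finset.mem_univ τ.root), if_pos rfl]
    congr 1
    rw [Finset.sum_div, ← Finset.add_sum_erase _ (fun v => τ.size v / _)
      (Finset.mem_univ τ.root), τ.size_root, div_self hn.ne', add_sub_cancel_left]
    exact Finset.sum_congr rfl fun c hc => if_neg (Finset.ne_of_mem_erase hc)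
  simp only [Fintype.sum_sum_type, stat, ← Finset.mul_sum, e, ← Finset.sum_div,
    Finset.sum_const, Finset.card_univ, nsmul_eq_mul]
  unfold hold
  field_simp
  ring

lemma stat_stationary (z : V ⊕ V ⊕ V) : ∑ w, τ.stat w * τ.chain w z = τ.stat z := by
  have hn := τ.card_cast_pos
  have hD : (0 : ℝ) ≤ D := Nat.cast_nonneg D
  have hh : τ.hold ≠ 0 := by linarith [τ.hold_bounds.1]
  rcases z with v | v | v
  · have hs := (τ.size_pos v).ne'
    simp only [Fintype.sum_sum_type, stat, chain, mul_ite, mul_zero, Finset.sum_ite_eq,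
      Finset.mem_univ, if_true, Finset.sum_const_zero, zero_add]
    field_simp
    ring
  · have e : ∀ u, (1 / (8 * (D : ℝ) + 8) * (if u = τ.root then τ.hold
          else τ.size u / Fintype.card V)) *
        (if v = τ.par u then (if u = τ.root then 1 - 1 / τ.hold else 1) else 0)
        = 1 / (8 * D + 8) * (1 / Fintype.card V *
            (if u ≠ τ.root ∧ τ.par u = v then τ.size u else 0)
          + if u = τ.root then (if v = τ.root then τ.hold - 1 else 0) else 0) := by
      intro u
      by_cases hu : u = τ.root
      · subst hu
        by_cases hv : v = τ.root
        · simp [hv, τ.par_root]; field_simp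
        · simp [hv, τ.par_root]
      · by_cases hv : v = τ.par u
        · simp only [hu, hv, ne_eq, not_false_eq_true, and_self, if_true, if_false]
          field_simp
          ring
        · simp [hu, hv, Ne.symm hv]
    have hr := τ.size_rec v
    simp only [Fintype.sum_sum_type, stat, chain, e, ← Finset.mul_sum, Finset.sum_add_distrib,
      Finset.sum_ite_eq', Finset.mem_univ, if_true]
    rw [← sub_eq_iff_eq_add'.2 hr]
    by_cases hv : v = τ.root
    · subst hv
      simp [τ.size_root]
      field_simp
      ring
    · simp [hv]
      field_simp
      ring
  · simp only [Fintype.sum_sum_type, stat, chain, mul_zero, Finset.sum_const_zero, zero_add]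
    by_cases hv : v = τ.root
    · subst hv
      simp [τ.size_root]
      field_simp
    · have hs := (τ.size_pos (τ.par v)).ne'
      simp [hv]
      field_simp

lemma chain_conformant {G : SimpleGraph V} (hτ : ∀ v, v ≠ τ.root → G.Adj v (τ.par v))
    (x y : V ⊕ V ⊕ V) (h : 0 < τ.chain x y) :
    G.Adj (Sum.elim id (Sum.elim id id) x) (Sum.elim id (Sum.elim id id) y) ∨
      Sum.elim id (Sum.elim id id) x = Sum.elim id (Sum.elim id id) y := by
  rcases x with u | u | u <;> rcases y with v | v | v <;> simp only [chain] at h <;>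
    simp only [Sum.elim_inl, Sum.elim_inr, id]
  · split_ifs at h with h1
    · exact Or.inr h1.symm
    · exact absurd h (lt_irrefl _)
  · split_ifs at h with h1
    · exact Or.inr h1.symm
    · exact absurd h (lt_irrefl _)
  · exact absurd h (lt_irrefl _)
  · exact absurd h (lt_irrefl _)
  · split_ifs at h with h1 h2
    · exact Or.inr (by rw [h1, h2, τ.par_root])
    · exact Or.inl (h1 ▸ hτ u h2)
    · exact absurd h (lt_irrefl _)
  · split_ifs at h with h1 h2
    · exact Or.inr (by rw [h1, h2])
    · exact absurd h (lt_irrefl _)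
    · exact absurd h (lt_irrefl _)
  · split_ifs at h with h1
    · exact Or.inr h1.symm
    · exact absurd h (lt_irrefl _)
  · exact absurd h (lt_irrefl _)
  · split_ifs at h with h1
    · exact Or.inl (h1.2 ▸ (hτ v h1.1).symm)
    · exact absurd h (lt_irrefl _)

/-- The lifted chain has at most five transitions per vertex. -/
lemma chain_edges :
    {e : (V ⊕ V ⊕ V) × (V ⊕ V ⊕ V) | e.1 ≠ e.2 ∧ 0 < τ.chain e.1 e.2}.ncard
      ≤ 5 * Fintype.card V := by
  let g : V ⊕ V ⊕ V ⊕ V ⊕ V → (V ⊕ V ⊕ V) × (V ⊕ V ⊕ V) :=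
    Sum.elim (fun v => (.inl v, .inr (.inl v)))
      (Sum.elim (fun v => (.inr (.inl v), .inr (.inl (τ.par v))))
        (Sum.elim (fun v => (.inr (.inl v), .inr (.inr v)))
          (Sum.elim (fun v => (.inr (.inr v), .inl v))
            (fun v => (.inr (.inr (τ.par v)), .inr (.inr v))))))
  have hsub : {e : (V ⊕ V ⊕ V) × (V ⊕ V ⊕ V) | e.1 ≠ e.2 ∧ 0 < τ.chain e.1 e.2}
      ⊆ Set.range g := by
    rintro ⟨x, y⟩ ⟨hne, h⟩
    rcases x with u | u | u <;> rcases y with v | v | v <;> simp only [chain] at h <;>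
      (try split_ifs at h) <;> (try exact absurd h (lt_irrefl _))
    · simp_all
    · exact ⟨.inl u, by simp_all [g]⟩
    · exact ⟨.inr (.inl u), by simp_all [g]⟩
    · exact ⟨.inr (.inl u), by simp_all [g]⟩
    · exact ⟨.inr (.inr (.inl u)), by simp_all [g]⟩
    · exact ⟨.inr (.inr (.inr (.inl u))), by simp_all [g]⟩
    · exact ⟨.inr (.inr (.inr (.inr v))), by simp_all [g]⟩
  calc _ ≤ (Set.range g).ncard := Set.ncard_le_ncard hsub (Set.finite_range g)
    _ ≤ Nat.card (V ⊕ V ⊕ V ⊕ V ⊕ V) := by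
        rw [← Set.image_univ, ← Set.ncard_univ]; exact Set.ncard_image_le
    _ = 5 * Fintype.card V := by simp; ring

/-! ### The minorization bound -/

lemma pow_succ_apply (m : ℕ) (w z : V ⊕ V ⊕ V) :
    (τ.chain ^ (m + 1)) w z = ∑ y, τ.chain w y * (τ.chain ^ m) y z := by
  rw [pow_succ', Matrix.mul_apply]

/-- The downward walk from the root passes through `u` with probability at least (the number
of vertices below `u`) `/ n`: the ratios of subtree sizes telescope along the path. -/
lemma pow_down (d : ℕ) (u : V) (hd : τ.depth u = d) :
    τ.size u / Fintype.card V ≤ (τ.chain ^ d) (.inr (.inr τ.root)) (.inr (.inr u)) := by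
  induction d generalizing u with
  | zero =>
    have hu : u = τ.root := by
      by_contra h
      have := τ.depth_par u h
      omega
    subst hu
    rw [τ.size_root, div_self τ.card_cast_pos.ne']
    simp
  | succ d ih =>
    have hu : u ≠ τ.root := by
      rintro rfl
      rw [τ.depth_root] at hd; omega
    have h1 := ih (τ.par u) (by have := τ.depth_par u hu; omega)
    have h2 := pow_mul_pow_le τ.chain_rowStochastic d 1 (.inr (.inr τ.root))
      (.inr (.inr (τ.par u))) (.inr (.inr u))
    rw [pow_one] at h2
    have h3 : τ.chain (.inr (.inr (τ.par u))) (.inr (.inr u)) = τ.size u / τ.size (τ.par u) := by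
      simp [chain, hu]
    rw [h3] at h2
    have hs := τ.size_pos u
    have hs' := τ.size_pos (τ.par u)
    refine le_trans (le_trans (le_of_eq ?_) (mul_le_mul_of_nonneg_right h1 (by positivity))) h2
    field_simp

lemma pow_stay (k : ℕ) (u : V) :
    (1 - 1 / (4 * (D : ℝ) + 4)) ^ k ≤ (τ.chain ^ k) (.inl u) (.inl u) := by
  have hD : (0 : ℝ) ≤ D := Nat.cast_nonneg D
  have h0 : (0 : ℝ) ≤ 1 - 1 / (4 * D + 4) := by
    rw [sub_nonneg, div_le_one (by positivity)]; linarith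
  induction k with
  | zero => simp
  | succ k ih =>
    have h2 := pow_mul_pow_le τ.chain_rowStochastic k 1 (.inl u) (.inl u) (.inl u)
    rw [pow_one] at h2
    have h3 : τ.chain (.inl u) (.inl u) = 1 - 1 / (4 * D + 4) := by simp [chain]
    rw [h3] at h2
    rw [pow_succ]
    exact (mul_le_mul_of_nonneg_right ih h0).trans h2

/-- A walk holding with probability `1 - 1/(4D+4)` stays put for `12D+12` steps with
probability at least `1/64`. -/
lemma stay_bound (D k : ℕ) (hk : k ≤ 12 * D + 12) :
    (1 / 64 : ℝ) ≤ (1 - 1 / (4 * (D : ℝ) + 4)) ^ k := by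
  have hD : (0 : ℝ) ≤ D := Nat.cast_nonneg D
  have hp : 1 / (4 * (D : ℝ) + 4) ≤ 1 := by rw [div_le_one (by positivity)]; linarith
  have hp0 : 0 ≤ 1 / (4 * (D : ℝ) + 4) := by positivity
  have h1 : (1 / 2 : ℝ) ≤ (1 - 1 / (4 * (D : ℝ) + 4)) ^ (2 * D + 2) := by
    have := one_add_mul_le_pow (a := -(1 / (4 * (D : ℝ) + 4))) (by linarith) (2 * D + 2)
    rw [← sub_eq_add_neg] at this
    refine le_trans (le_of_eq ?_) this
    push_cast
    field_simp
    ring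
  calc (1 / 64 : ℝ) = (1 / 2) ^ 6 := by norm_num
    _ ≤ ((1 - 1 / (4 * (D : ℝ) + 4)) ^ (2 * D + 2)) ^ 6 := pow_le_pow_left₀ (by norm_num) h1 6
    _ = (1 - 1 / (4 * (D : ℝ) + 4)) ^ (12 * D + 12) := by rw [← pow_mul]; congr 1; ring
    _ ≤ _ := pow_le_pow_of_le_one (by linarith) (by linarith) hk

/-- From the top of the downward tree, every original vertex is reached and held with
probability of order `1/n`. -/
lemma minor_down_root (u : V) (m : ℕ) (h1 : D + 1 ≤ m) (h2 : m ≤ 12 * D + 12) :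
    1 / (64 * (Fintype.card V : ℝ)) ≤ (τ.chain ^ m) (.inr (.inr τ.root)) (.inl u) := by
  have hn := τ.card_cast_pos
  have hs := τ.size_pos u
  have hd := τ.depth_le u
  have e1 := τ.pow_down _ u rfl
  have e2 := pow_mul_pow_le τ.chain_rowStochastic (τ.depth u) 1 (.inr (.inr τ.root))
    (.inr (.inr u)) (.inl u)
  have e3 : τ.chain (.inr (.inr u)) (.inl u) = 1 / τ.size u := by simp [chain]
  rw [pow_one, e3] at e2
  have e4 : 1 / (Fintype.card V : ℝ)
      ≤ (τ.chain ^ (τ.depth u + 1)) (.inr (.inr τ.root)) (.inl u) := by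
    refine le_trans (le_trans (le_of_eq ?_) (mul_le_mul_of_nonneg_right e1 (by positivity))) e2
    field_simp
  have e5 := pow_mul_pow_le τ.chain_rowStochastic (τ.depth u + 1) (m - (τ.depth u + 1))
    (.inr (.inr τ.root)) (.inl u) (.inl u)
  rw [Nat.add_sub_cancel' (by omega)] at e5
  have e6 := (stay_bound D (m - (τ.depth u + 1)) (by omega)).trans (τ.pow_stay _ u)
  refine le_trans (le_trans (le_of_eq ?_) (mul_le_mul e4 e6 (by norm_num) (by
    exact (τ.chain_rowStochastic.pow _).1 _ _))) e5
  field_simp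

/-- At the top of the upward tree the mean holding time is at most `4D + 4`, so that many extra
steps cost only a factor `2`. -/
lemma minor_root (u : V) (m : ℕ) (h1 : 5 * D + 5 ≤ m) (h2 : m ≤ 12 * D + 12) :
    1 / (64 * (Fintype.card V : ℝ)) / 2 ≤ (τ.chain ^ m) (.inr (.inl τ.root)) (.inl u) := by
  have hn := τ.card_cast_pos
  have hh := τ.hold_bounds
  have hpos : 0 < τ.hold := by linarith
  refine half_of_recursion (a := fun m => (τ.chain ^ m) (.inr (.inl τ.root)) (.inl u))
    (q := 1 / τ.hold) (m₀ := D + 1) (m₁ := 12 * D + 12) (K := 4 * D + 4) (by positivity)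
    ((div_le_one hpos).2 hh.1) (by positivity) ?_
    (fun m => (τ.chain_rowStochastic.pow m).1 _ _) ?_ (by omega) h2
  · rw [one_div, inv_mul_eq_div, one_le_div hpos]
    push_cast
    exact hh.2
  · intro m hm hm'
    rw [τ.pow_succ_apply, τ.step_root (fun y => (τ.chain ^ m) y (.inl u))]
    have := mul_le_mul_of_nonneg_left (τ.minor_down_root u m hm hm'.le)
      (by positivity : 0 ≤ 1 / τ.hold)
    linarith

lemma minor_up (u : V) (d : ℕ) (v : V) (hd : τ.depth v = d) (m : ℕ) (h1 : 5 * D + 5 + d ≤ m)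
    (h2 : m ≤ 12 * D + 12) :
    1 / (64 * (Fintype.card V : ℝ)) / 2 ≤ (τ.chain ^ m) (.inr (.inl v)) (.inl u) := by
  induction d generalizing v m with
  | zero =>
    have hv : v = τ.root := by
      by_contra h
      have := τ.depth_par v h
      omega
    subst hv
    exact τ.minor_root u m (by omega) h2
  | succ d ih =>
    have hv : v ≠ τ.root := by
      rintro rfl
      rw [τ.depth_root] at hd; omega
    obtain ⟨m, rfl⟩ : ∃ k, m = k + 1 := ⟨m - 1, by omega⟩
    rw [τ.pow_succ_apply, τ.step_up (fun y => (τ.chain ^ m) y (.inl u)) v hv]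
    exact ih _ (by have := τ.depth_par v hv; omega) m (by omega) (by omega)

lemma minor_inl (u v : V) (m : ℕ) (h1 : 10 * D + 9 ≤ m) (h2 : m ≤ 12 * D + 12) :
    1 / (64 * (Fintype.card V : ℝ)) / 2 / 2 ≤ (τ.chain ^ m) (.inl v) (.inl u) := by
  have hn := τ.card_cast_pos
  have hD : (0 : ℝ) ≤ D := Nat.cast_nonneg D
  refine half_of_recursion (a := fun m => (τ.chain ^ m) (.inl v) (.inl u))
    (q := 1 / (4 * D + 4)) (m₀ := 6 * D + 5) (m₁ := 12 * D + 12) (K := 4 * D + 4)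
    (by positivity) ?_ (by positivity) ?_
    (fun m => (τ.chain_rowStochastic.pow m).1 _ _) ?_ (by omega) h2
  · rw [div_le_one (by positivity)]; linarith
  · push_cast
    rw [one_div, inv_mul_cancel₀ (by positivity)]
  · intro m hm hm'
    rw [τ.pow_succ_apply, τ.step_inl (fun y => (τ.chain ^ m) y (.inl u))]
    have := mul_le_mul_of_nonneg_left
      (τ.minor_up u _ v rfl m (by have := τ.depth_le v; omega) hm'.le)
      (by positivity : (0 : ℝ) ≤ 1 / (4 * D + 4))
    linarith

/-- From the downward tree, descending induction on the depth: after at most `D + 1` steps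
the walk has stopped at an original vertex. -/
lemma minor_down (u : V) (j : ℕ) (v : V) (hj : D + 1 ≤ τ.depth v + j) (m : ℕ)
    (h1 : 10 * D + 9 + j ≤ m) (h2 : m ≤ 12 * D + 12) :
    1 / (64 * (Fintype.card V : ℝ)) / 2 / 2 ≤ (τ.chain ^ m) (.inr (.inr v)) (.inl u) := by
  induction j generalizing v m with
  | zero => have := τ.depth_le v; omega
  | succ j ih =>
    obtain ⟨m, rfl⟩ : ∃ k, m = k + 1 := ⟨m - 1, by omega⟩
    rw [τ.pow_succ_apply, τ.step_down (fun y => (τ.chain ^ m) y (.inl u)) v,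
      le_div_iff₀ (τ.size_pos v), τ.size_rec v, mul_add, mul_one, Finset.mul_sum]
    refine add_le_add (τ.minor_inl u v m (by omega) (by omega))
      (Finset.sum_le_sum fun c _ => ?_)
    split_ifs with hc
    · rw [mul_comm]
      refine mul_le_mul_of_nonneg_left (ih c ?_ m (by omega) (by omega)) (τ.size_pos c).le
      have := τ.depth_par c hc.1
      rw [hc.2] at this
      omega
    · simp

lemma minorization (w : V ⊕ V ⊕ V) (u : V) :
    1 / 256 * (1 / (Fintype.card V : ℝ)) ≤ (τ.chain ^ (12 * D + 12)) w (.inl u) := by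
  have hn := τ.card_cast_pos
  have e : 1 / 256 * (1 / (Fintype.card V : ℝ)) = 1 / (64 * (Fintype.card V : ℝ)) / 2 / 2 := by
    field_simp; norm_num
  rw [e]
  rcases w with v | v | v
  · exact τ.minor_inl u v _ (by omega) le_rfl
  · refine le_trans (half_le_self (by positivity)) (τ.minor_up u _ v rfl _ ?_ le_rfl)
    have := τ.depth_le v; omega
  · exact τ.minor_down u (D + 1) v (by omega) _ (by omega) le_rfl

lemma chain_mixing (t : ℕ) (u v : V) :
    |2 * (τ.chain ^ t) (.inl v) (.inl u) - 1 / (Fintype.card V : ℝ)|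
      ≤ 2 * (1 - 1 / 256 : ℝ) ^ (t / (12 * D + 12)) := by
  have hn := τ.card_cast_pos
  have h := doeblin_mixing τ.chain_rowStochastic (T := 12 * D + 12) (δ := 1 / 256)
    (Sum.elim (fun _ => 1 / (Fintype.card V : ℝ)) (fun _ => 0))
    (by simp [Fintype.sum_sum_type, hn.ne'])
    (by
      rintro w (z | z)
      · exact τ.minorization w z
      · simpa using (τ.chain_rowStochastic.pow _).1 _ _)
    τ.stat_nonneg τ.stat_sum τ.stat_stationary t (.inl v) (.inl u)
  have e : 2 * (τ.chain ^ t) (.inl v) (.inl u) - 1 / (Fintype.card V : ℝ)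
      = 2 * ((τ.chain ^ t) (.inl v) (.inl u) - τ.stat (.inl u)) := by
    simp only [stat]; field_simp
  rw [e, abs_mul, abs_two]
  linarith

/-- The lifted chain averages to relative accuracy `ε` in time `O(D (log n + log (1/ε)))`. -/
lemma chain_averages (hD1 : 1 ≤ D) (hcard : 2 ≤ Fintype.card V) (x : V → ℝ)
    (hx : ∀ v, 0 ≤ x v) (y₀ : V ⊕ V ⊕ V → ℝ) (hy : ∀ v, y₀ (.inl v) = x v)
    (hy0 : ∀ w, w ∉ Set.range (Sum.inl : V → V ⊕ V ⊕ V) → y₀ w = 0) (v : V) (ε : ℝ)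
    (hε : ε ∈ Set.Ioo (0 : ℝ) 1) (t : ℕ)
    (ht : 20000 * (D : ℝ) * (Real.log (Fintype.card V) + Real.log (1 / ε)) ≤ t) :
    |2 * (∑ w, (τ.chain ^ t) (.inl v) w * y₀ w) - (∑ v, x v) / (Fintype.card V : ℝ)|
      ≤ ε * ((∑ v, x v) / (Fintype.card V : ℝ)) := by
  have hn := τ.card_cast_pos
  have hn2 : (2 : ℝ) ≤ Fintype.card V := by exact_mod_cast hcard
  have hD : (1 : ℝ) ≤ D := by exact_mod_cast hD1
  set ℓ := Real.log (Fintype.card V) + Real.log (1 / ε) with hℓ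
  have hl2 : Real.log 2 ≤ ℓ := by
    have h1 := Real.log_le_log (by norm_num) hn2
    have h2 : 0 ≤ Real.log (1 / ε) := Real.log_nonneg (by
      rw [le_div_iff₀ hε.1]; linarith [hε.2])
    linarith
  have hl : 1 / 2 ≤ ℓ := by linarith [Real.log_two_gt_d9]
  have hexp : Real.exp (-ℓ) = ε / Fintype.card V := by
    rw [hℓ, Real.exp_neg, Real.exp_add, Real.exp_log hn, Real.exp_log (by
      have := hε.1; positivity)]
    have := hε.1.ne'
    field_simp
  -- `12D + 12 ≤ 24D` and `1 ≤ 2ℓ`, so the constant `20000 > 24 * 514` absorbs the rounding.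
  have hk : 512 * ℓ ≤ ((t / (12 * D + 12) : ℕ) : ℝ) := by
    have h1 : t < (12 * D + 12) * (t / (12 * D + 12) + 1) := Nat.lt_mul_div_succ t (by omega)
    have h2 : (t : ℝ) < (12 * D + 12) * (((t / (12 * D + 12) : ℕ) : ℝ) + 1) := by
      exact_mod_cast h1
    by_contra hcon
    push Not at hcon
    have h3 : (12 * (D : ℝ) + 12) * (((t / (12 * D + 12) : ℕ) : ℝ) + 1)
        ≤ (24 * D) * (514 * ℓ) :=
      mul_le_mul (by linarith) (by linarith) (by positivity) (by positivity)
    nlinarith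
  have hrate : 2 * (1 - 1 / 256 : ℝ) ^ (t / (12 * D + 12)) ≤ ε / Fintype.card V := by
    have h1 : (1 - 1 / 256 : ℝ) ^ (t / (12 * D + 12)) ≤ Real.exp (-(2 * ℓ)) := by
      calc (1 - 1 / 256 : ℝ) ^ (t / (12 * D + 12))
          ≤ (Real.exp (-(1 / 256))) ^ (t / (12 * D + 12)) :=
            pow_le_pow_left₀ (by norm_num) (by
              linarith [Real.add_one_le_exp (-(1 / 256 : ℝ))]) _
        _ = Real.exp (((t / (12 * D + 12) : ℕ) : ℝ) * -(1 / 256)) := by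
            rw [← Real.exp_nat_mul]
        _ ≤ _ := Real.exp_le_exp.2 (by linarith)
    have h2 : Real.exp (-(2 * ℓ)) ≤ 1 / 2 * Real.exp (-ℓ) := by
      have : -(2 * ℓ) = -ℓ + -ℓ := by ring
      rw [this, Real.exp_add]
      refine mul_le_mul_of_nonneg_right ?_ (Real.exp_pos _).le
      rw [Real.exp_neg, ← one_div]
      refine one_div_le_one_div_of_le (by norm_num) ?_
      rw [← Real.log_le_iff_le_exp (by norm_num)]
      exact hl2
    rw [← hexp]
    linarith
  have e : 2 * (∑ w, (τ.chain ^ t) (.inl v) w * y₀ w) - (∑ v, x v) / (Fintype.card V : ℝ)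
      = ∑ u, (2 * (τ.chain ^ t) (.inl v) (.inl u) - 1 / (Fintype.card V : ℝ)) * x u := by
    rw [Fintype.sum_sum_type]
    have h0 : ∑ z : V ⊕ V, (τ.chain ^ t) (.inl v) (.inr z) * y₀ (.inr z) = 0 :=
      Finset.sum_eq_zero fun z _ => by rw [hy0 _ (by simp), mul_zero]
    rw [h0, add_zero, Finset.mul_sum, Finset.sum_div, ← Finset.sum_sub_distrib]
    exact Finset.sum_congr rfl fun u _ => by rw [hy]; ring
  rw [e]
  calc _ ≤ ∑ u, |(2 * (τ.chain ^ t) (.inl v) (.inl u) - 1 / (Fintype.card V : ℝ)) * x u| :=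
        Finset.abs_sum_le_sum_abs _ _
    _ ≤ ∑ u, ε / Fintype.card V * x u := by
        refine Finset.sum_le_sum fun u _ => ?_
        rw [abs_mul, abs_of_nonneg (hx u)]
        exact mul_le_mul_of_nonneg_right ((τ.chain_mixing t u v).trans hrate) (hx u)
    _ = _ := by rw [← Finset.mul_sum]; ring

end SpanTree

/-! ### Doubling dimension -/

/-- Iterating the covering property down to balls of radius `1`, which are singletons. -/
lemma doubling_ball_card {V : Type} [Fintype V] [DecidableEq V] {G : SimpleGraph V}
    (hG : G.Connected) {ρ : ℝ} (h : DoublingDimLE G ρ) (k : ℕ) (x : V) :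
    ((univ.filter fun w => G.dist x w < 2 ^ k).card : ℝ) ≤ ((2 : ℝ) ^ ρ) ^ k := by
  induction k generalizing x with
  | zero =>
    have : (univ.filter fun w => G.dist x w < 2 ^ 0) ⊆ {x} := by
      intro w hw
      have hw' : G.dist x w = 0 := by simpa using hw
      simpa using ((hG.dist_eq_zero_iff).1 hw').symm
    have := Finset.card_le_card this
    rw [Finset.card_singleton] at this
    rw [pow_zero (M := ℝ)]
    exact_mod_cast this
  | succ k ih =>
    obtain ⟨s, hs, hcov⟩ := h x (2 ^ (k + 1)) (by positivity)
    have hsub : (univ.filter fun w => G.dist x w < 2 ^ (k + 1))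
        ⊆ s.biUnion fun y => univ.filter fun w => G.dist y w < 2 ^ k := by
      intro w hw
      have hw' : G.dist x w < 2 ^ (k + 1) := by simpa using hw
      obtain ⟨y, hy, hyw⟩ := hcov w (by exact_mod_cast hw')
      have e : (2 : ℝ) ^ (k + 1) / 2 = 2 ^ k := by rw [pow_succ]; ring
      rw [e] at hyw
      simp only [Finset.mem_biUnion, Finset.mem_filter, Finset.mem_univ, true_and]
      exact ⟨y, hy, by exact_mod_cast hyw⟩
    calc ((univ.filter fun w => G.dist x w < 2 ^ (k + 1)).card : ℝ)
        ≤ ∑ y ∈ s, ((univ.filter fun w => G.dist y w < 2 ^ k).card : ℝ) := by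
          exact_mod_cast (Finset.card_le_card hsub).trans Finset.card_biUnion_le
      _ ≤ ∑ y ∈ s, ((2 : ℝ) ^ ρ) ^ k := Finset.sum_le_sum fun y _ => ih y
      _ = s.card * ((2 : ℝ) ^ ρ) ^ k := by simp
      _ ≤ (2 : ℝ) ^ ρ * ((2 : ℝ) ^ ρ) ^ k := mul_le_mul_of_nonneg_right hs (by positivity)
      _ = _ := by rw [pow_succ]; ring

/-- A graph of doubling dimension at most `ρ` has at most `(2D)^ρ` vertices, hence
`n ≤ 2 D n^{1 - 1/(ρ+1)}`. -/
lemma doubling_card_le {V : Type} [Fintype V] [DecidableEq V] {G : SimpleGraph V} {D : ℕ}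
    (hG : G.Connected) (hcard : 2 ≤ Fintype.card V) (hD1 : 1 ≤ D)
    (hD : ∀ u v, G.dist u v ≤ D) {ρ : ℝ} (hρ : 1 ≤ ρ) (h : DoublingDimLE G ρ) :
    (Fintype.card V : ℝ) ≤ 2 * D * (Fintype.card V : ℝ) ^ (1 - 1 / (ρ + 1)) := by
  obtain ⟨x⟩ := hG.nonempty
  have hn : (0 : ℝ) < Fintype.card V := by exact_mod_cast (by omega : 0 < Fintype.card V)
  have hDr : (1 : ℝ) ≤ D := by exact_mod_cast hD1
  have h1 := doubling_ball_card hG h (Nat.log 2 D + 1) x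
  have hall : (univ.filter fun w => G.dist x w < 2 ^ (Nat.log 2 D + 1)) = univ :=
    Finset.filter_true_of_mem fun w _ =>
      (hD x w).trans_lt (Nat.lt_pow_succ_log_self (by norm_num) D)
  rw [hall, Finset.card_univ] at h1
  have h2 : (2 : ℝ) ^ (Nat.log 2 D + 1) ≤ 2 * D := by
    have := Nat.pow_log_le_self 2 (by omega : D ≠ 0)
    have h3 : (2 : ℝ) ^ Nat.log 2 D ≤ D := by exact_mod_cast this
    rw [pow_succ]; linarith
  have h3 : (Fintype.card V : ℝ) ≤ (2 * D : ℝ) ^ ρ := by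
    refine h1.trans ?_
    rw [← Real.rpow_natCast, ← Real.rpow_mul (by norm_num), mul_comm, Real.rpow_mul (by norm_num),
      Real.rpow_natCast]
    exact Real.rpow_le_rpow (by positivity) h2 (by linarith)
  have h4 : (Fintype.card V : ℝ) ^ (1 / (ρ + 1)) ≤ 2 * D := by
    calc (Fintype.card V : ℝ) ^ (1 / (ρ + 1)) ≤ ((2 * D : ℝ) ^ (ρ + 1)) ^ (1 / (ρ + 1)) :=
          Real.rpow_le_rpow hn.le
            (h3.trans (Real.rpow_le_rpow_of_exponent_le (by linarith) (by linarith)))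
            (by have : 0 < ρ + 1 := by linarith
                positivity)
      _ = 2 * D := by
          rw [← Real.rpow_mul (by positivity), mul_one_div_cancel (by linarith), Real.rpow_one]
  calc (Fintype.card V : ℝ)
      = (Fintype.card V : ℝ) ^ (1 / (ρ + 1)) * (Fintype.card V : ℝ) ^ (1 - 1 / (ρ + 1)) := by
        rw [← Real.rpow_add hn, add_sub_cancel, Real.rpow_one]
    _ ≤ _ := mul_le_mul_of_nonneg_right h4 (by positivity)

/-- Theorem 2 of the paper: distributed averaging via pseudo-lifting.
There is an absolute constant `C > 0` and, for each `ρ ≥ 1`, a constant `Cρ ρ > 0`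
depending only on `ρ`, such that for any connected graph `G` with `n ≥ 2` vertices and
diameter `D ≥ 1` there is a graph-conformant lifted chain `Phat` on a set `W` (with a
copy `ι v` of each node `v`, projection `f`): starting from the lifted vector `y₀`
placing `x_v` at `ι v` and `0` elsewhere, after `t ≥ C·D·(log n + log(1/ε))` iterations
every node's output `2 (Phat^t y₀)(ι v)` is within relative error `ε` of the average.
Moreover, if `G` has doubling dimension at most `ρ`, the chain can additionally be
chosen with at most `Cρ ρ · D · n^{1-1/(ρ+1)}` off-diagonal positive entries. -/
theorem distributed_averaging_via_pseudo_lifting :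
    ∃ C : ℝ, 0 < C ∧ ∃ Cρ : ℝ → ℝ, (∀ ρ : ℝ, 1 ≤ ρ → 0 < Cρ ρ) ∧
    ∀ (V : Type) [Fintype V] [DecidableEq V] (G : SimpleGraph V) (D : ℕ),
      G.Connected → 2 ≤ Fintype.card V → 1 ≤ D →
      (∀ u v : V, G.dist u v ≤ D) → (∃ u v : V, G.dist u v = D) →
      -- base claim
      (∃ (W : Type) (_ : Fintype W) (_ : DecidableEq W)
         (ι : V → W) (f : W → V) (Phat : Matrix W W ℝ),
         Function.Injective ι ∧ (∀ v, f (ι v) = v) ∧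
         RowStochastic Phat ∧
         (∀ uh vh, 0 < Phat uh vh → G.Adj (f uh) (f vh) ∨ f uh = f vh) ∧
         (∀ (x : V → ℝ), (∀ v, 0 ≤ x v) →
           0 < (∑ v, x v) / (Fintype.card V : ℝ) →
           ∀ y₀ : W → ℝ, (∀ v, y₀ (ι v) = x v) → (∀ wh, wh ∉ Set.range ι → y₀ wh = 0) →
           ∀ (v : V) (ε : ℝ), ε ∈ Set.Ioo (0 : ℝ) 1 → ∀ t : ℕ,
             C * (D : ℝ) * (Real.log (Fintype.card V) + Real.log (1 / ε)) ≤ (t : ℝ) →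
             |2 * (∑ wh, (Phat ^ t) (ι v) wh * y₀ wh)
                 - (∑ v, x v) / (Fintype.card V : ℝ)|
               ≤ ε * ((∑ v, x v) / (Fintype.card V : ℝ)))) ∧
      -- moreover: under a doubling dimension bound, the chain can also be chosen small
      (∀ ρ : ℝ, 1 ≤ ρ → DoublingDimLE G ρ →
        ∃ (W : Type) (_ : Fintype W) (_ : DecidableEq W)
          (ι : V → W) (f : W → V) (Phat : Matrix W W ℝ),
          Function.Injective ι ∧ (∀ v, f (ι v) = v) ∧
          RowStochastic Phat ∧
          (∀ uh vh, 0 < Phat uh vh → G.Adj (f uh) (f vh) ∨ f uh = f vh) ∧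
          (∀ (x : V → ℝ), (∀ v, 0 ≤ x v) →
            0 < (∑ v, x v) / (Fintype.card V : ℝ) →
            ∀ y₀ : W → ℝ, (∀ v, y₀ (ι v) = x v) → (∀ wh, wh ∉ Set.range ι → y₀ wh = 0) →
            ∀ (v : V) (ε : ℝ), ε ∈ Set.Ioo (0 : ℝ) 1 → ∀ t : ℕ,
              C * (D : ℝ) * (Real.log (Fintype.card V) + Real.log (1 / ε)) ≤ (t : ℝ) →
              |2 * (∑ wh, (Phat ^ t) (ι v) wh * y₀ wh)
                  - (∑ v, x v) / (Fintype.card V : ℝ)|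
                ≤ ε * ((∑ v, x v) / (Fintype.card V : ℝ))) ∧
          ({p : W × W | p.1 ≠ p.2 ∧ 0 < Phat p.1 p.2}.ncard : ℝ)
            ≤ Cρ ρ * (D : ℝ) * (Fintype.card V : ℝ) ^ (1 - 1 / (ρ + 1))) := by
  refine ⟨20000, by norm_num, fun _ => 10, fun _ _ => by norm_num, ?_⟩
  intro V _ _ G D hG hcard hD1 hD _
  obtain ⟨τ, hτ⟩ := exists_bfsTree hG hD
  have hav : ∀ (x : V → ℝ), (∀ v, 0 ≤ x v) → 0 < (∑ v, x v) / (Fintype.card V : ℝ) → _ :=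
    fun x hx _ y₀ hy hy0 v ε hε t ht =>
      τ.chain_averages hD1 hcard x hx y₀ hy hy0 v ε hε t ht
  refine ⟨⟨V ⊕ V ⊕ V, inferInstance, inferInstance, Sum.inl, Sum.elim id (Sum.elim id id),
    τ.chain, Sum.inl_injective, fun _ => rfl, τ.chain_rowStochastic, τ.chain_conformant hτ,
    hav⟩, ?_⟩
  intro ρ hρ hdoub
  refine ⟨V ⊕ V ⊕ V, inferInstance, inferInstance, Sum.inl, Sum.elim id (Sum.elim id id),
    τ.chain, Sum.inl_injective, fun _ => rfl, τ.chain_rowStochastic, τ.chain_conformant hτ,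
    hav, ?_⟩
  have h1 : ({e : (V ⊕ V ⊕ V) × (V ⊕ V ⊕ V) | e.1 ≠ e.2 ∧ 0 < τ.chain e.1 e.2}.ncard : ℝ)
      ≤ 5 * Fintype.card V := by exact_mod_cast τ.chain_edges
  linarith [doubling_card_le hG hcard hD1 hD hρ hdoub]
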